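/- The bistatistic (number of rows, number of 0's) on permutation tableaux with n-k columns contained in a k×(n-k) rectangle, summed over all k, is Euler-Mahonian: D_{k,n}(p,1,1) = B_{n,k}(p), where B_{n,k}(p) = Σ_π p^{maj(π) - C(k,2)} over permutations π ∈ S_n with k-1 descents, is Carlitz' q-analog of the Eulerian numbers. -/

import Mathlib

open Finset


def wexB {n : ℕ} (π : Equiv.Perm (Fin n)) : Finset (Fin n) :=
  Finset.univ.filter (fun i => i ≤ π i)

def wex {n : ℕ} (π : Equiv.Perm (Fin n)) : ℕ := (wexB π).card

def wexbotsum {n : ℕ} (π : Equiv.Perm (Fin n)) : ℕ := ∑ i ∈ wexB π, (i.val + 1)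

def wextopsum {n : ℕ} (π : Equiv.Perm (Fin n)) : ℕ := ∑ i ∈ wexB π, ((π i).val + 1)

def wexbotsSet {n : ℕ} (π : Equiv.Perm (Fin n)) : Finset ℕ :=
  (wexB π).image (fun i => i.val + 1)

def wextopsSet {n : ℕ} (π : Equiv.Perm (Fin n)) : Finset ℕ :=
  (wexB π).image (fun i => (π i).val + 1)

/-- `A_EE`: pairs `(i,j)` with `j < i ≤ π i < π j`. -/
def AEE {n : ℕ} (π : Equiv.Perm (Fin n)) : ℕ :=
  (Finset.univ.filter (fun p : Fin n × Fin n =>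
    p.2 < p.1 ∧ p.1 ≤ π p.1 ∧ π p.1 < π p.2)).card

/-- `A_NN`: pairs `(i,j)` with `π j < π i < i < j`. -/
def ANN {n : ℕ} (π : Equiv.Perm (Fin n)) : ℕ :=
  (Finset.univ.filter (fun p : Fin n × Fin n =>
    π p.2 < π p.1 ∧ π p.1 < p.1 ∧ p.1 < p.2)).card

/-- `A_EN`: pairs `(i,j)` with `j ≤ π j < π i < i`. -/
def AEN {n : ℕ} (π : Equiv.Perm (Fin n)) : ℕ :=
  (Finset.univ.filter (fun p : Fin n × Fin n =>
    p.2 ≤ π p.2 ∧ π p.2 < π p.1 ∧ π p.1 < p.1)).card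

/-- `A_NE`: pairs `(i,j)` with `π i < i < j ≤ π j`. -/
def ANE {n : ℕ} (π : Equiv.Perm (Fin n)) : ℕ :=
  (Finset.univ.filter (fun p : Fin n × Fin n =>
    π p.1 < p.1 ∧ p.1 < p.2 ∧ p.2 ≤ π p.2)).card

/-- `C_EE`: pairs `(i,j)` with `j < i ≤ π j < π i`. -/
def CEE {n : ℕ} (π : Equiv.Perm (Fin n)) : ℕ :=
  (Finset.univ.filter (fun p : Fin n × Fin n =>
    p.2 < p.1 ∧ p.1 ≤ π p.2 ∧ π p.2 < π p.1)).card

/-- `C_NN`: pairs `(i,j)` with `π i < π j < i < j`. -/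
def CNN {n : ℕ} (π : Equiv.Perm (Fin n)) : ℕ :=
  (Finset.univ.filter (fun p : Fin n × Fin n =>
    π p.1 < π p.2 ∧ π p.2 < p.1 ∧ p.1 < p.2)).card

def descents {n : ℕ} (π : Equiv.Perm (Fin n)) : Finset (Fin n) :=
  Finset.univ.filter (fun i => ∃ h : i.val + 1 < n, π ⟨i.val + 1, h⟩ < π i)

def des {n : ℕ} (π : Equiv.Perm (Fin n)) : ℕ := (descents π).card

def destopsum {n : ℕ} (π : Equiv.Perm (Fin n)) : ℕ :=
  ∑ i ∈ descents π, ((π i).val + 1)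

def desbotsum {n : ℕ} (π : Equiv.Perm (Fin n)) : ℕ :=
  ∑ i ∈ descents π, (if h : i.val + 1 < n then (π ⟨i.val + 1, h⟩).val + 1 else 0)

def destopsSet {n : ℕ} (π : Equiv.Perm (Fin n)) : Finset ℕ :=
  (descents π).image (fun i => (π i).val + 1)

def desbotsSet {n : ℕ} (π : Equiv.Perm (Fin n)) : Finset ℕ :=
  (descents π).image
    (fun i => if h : i.val + 1 < n then (π ⟨i.val + 1, h⟩).val + 1 else 0)

def maj {n : ℕ} (π : Equiv.Perm (Fin n)) : ℕ := ∑ i ∈ descents π, (i.val + 1)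

/-- Occurrences of the generalized pattern `(2-31)`. -/
def P2d31 {n : ℕ} (π : Equiv.Perm (Fin n)) : ℕ :=
  (Finset.univ.filter (fun p : Fin n × Fin n =>
    p.1 < p.2 ∧ ∃ h : p.2.val + 1 < n,
      π ⟨p.2.val + 1, h⟩ < π p.1 ∧ π p.1 < π p.2)).card

/-- Occurrences of the generalized pattern `(31-2)`. -/
def P31d2 {n : ℕ} (π : Equiv.Perm (Fin n)) : ℕ :=
  (Finset.univ.filter (fun p : Fin n × Fin n =>
    ∃ h : p.1.val + 1 < n, π ⟨p.1.val + 1, h⟩ < π p.1 ∧ p.1.val + 1 < p.2.val ∧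
      π ⟨p.1.val + 1, h⟩ < π p.2 ∧ π p.2 < π p.1)).card

/-- Occurrences of the generalized pattern `(21-3)`. -/
def P21d3 {n : ℕ} (π : Equiv.Perm (Fin n)) : ℕ :=
  (Finset.univ.filter (fun p : Fin n × Fin n =>
    ∃ h : p.1.val + 1 < n, π ⟨p.1.val + 1, h⟩ < π p.1 ∧ p.1.val + 1 < p.2.val ∧
      π p.1 < π p.2)).card

/-- Occurrences of the generalized pattern `(3-21)`. -/
def P3d21 {n : ℕ} (π : Equiv.Perm (Fin n)) : ℕ :=
  (Finset.univ.filter (fun p : Fin n × Fin n =>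
    p.1 < p.2 ∧ ∃ h : p.2.val + 1 < n,
      π ⟨p.2.val + 1, h⟩ < π p.2 ∧ π p.2 < π p.1)).card

/-- Occurrences of the generalized pattern `(1-32)`. -/
def P1d32 {n : ℕ} (π : Equiv.Perm (Fin n)) : ℕ :=
  (Finset.univ.filter (fun p : Fin n × Fin n =>
    p.1 < p.2 ∧ ∃ h : p.2.val + 1 < n,
      π ⟨p.2.val + 1, h⟩ < π p.2 ∧ π p.1 < π ⟨p.2.val + 1, h⟩)).card

/-- Occurrences of the generalized pattern `(32-1)`. -/
def P32d1 {n : ℕ} (π : Equiv.Perm (Fin n)) : ℕ :=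
  (Finset.univ.filter (fun p : Fin n × Fin n =>
    ∃ h : p.1.val + 1 < n, π ⟨p.1.val + 1, h⟩ < π p.1 ∧ p.1.val + 1 < p.2.val ∧
      π p.2 < π ⟨p.1.val + 1, h⟩)).card


/-- A permutation tableau with `n-k` columns, encoded as a `{0,1,2}`-filling of the full
`k × m` rectangle: the `2`'s are the boxes outside the Young diagram (southeast corner). -/
def IsPermTableau {k m : ℕ} (T : Fin k → Fin m → Fin 3) : Prop :=
  (∀ j : Fin m, ∃ i : Fin k, T i j = 1) ∧
  (∀ (i : Fin k) (j : Fin m), T i j ≠ 2 →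
    ∀ (i' : Fin k) (j' : Fin m), i' ≤ i → j' ≤ j → T i' j' ≠ 2) ∧
  (∀ (i : Fin k) (j : Fin m), T i j = 0 →
    ¬ ((∃ i' < i, T i' j = 1) ∧ (∃ j' < j, T i j' = 1)))

def rowLen {k m : ℕ} (T : Fin k → Fin m → Fin 3) (i : Fin k) : ℕ :=
  (Finset.univ.filter (fun j => T i j ≠ 2)).card

def zerosT {k m : ℕ} (T : Fin k → Fin m → Fin 3) : ℕ :=
  ∑ i, (Finset.univ.filter (fun j => T i j = 0)).card

def onesT {k m : ℕ} (T : Fin k → Fin m → Fin 3) : ℕ :=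
  ∑ i, (Finset.univ.filter (fun j => T i j = 1)).card

def twosT {k m : ℕ} (T : Fin k → Fin m → Fin 3) : ℕ :=
  ∑ i, (Finset.univ.filter (fun j => T i j = 2)).card

/-- A valid `0/1`-filling of the Young diagram with row lengths `lam`. -/
def ValidFilling {k : ℕ} (lam : Fin k → ℕ) (F : ∀ i : Fin k, Fin (lam i) → Bool) : Prop :=
  (∀ (i : Fin k) (j : Fin (lam i)), ∃ (i' : Fin k) (h : (j : ℕ) < lam i'), F i' ⟨j, h⟩ = true) ∧
  (∀ (i : Fin k) (j : Fin (lam i)), F i j = false →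
    ¬ ((∃ (i' : Fin k) (h : (j : ℕ) < lam i'), i' < i ∧ F i' ⟨j, h⟩ = true) ∧
       (∃ j' : Fin (lam i), j' < j ∧ F i j' = true)))

def fillZeros {k : ℕ} {lam : Fin k → ℕ} (F : ∀ i : Fin k, Fin (lam i) → Bool) : ℕ :=
  ∑ i, (Finset.univ.filter (fun j => F i j = false)).card

def fillOnes {k : ℕ} {lam : Fin k → ℕ} (F : ∀ i : Fin k, Fin (lam i) → Bool) : ℕ :=
  ∑ i, (Finset.univ.filter (fun j => F i j = true)).card

open Classical in
/-- `F_λ(p,q)`, evaluated at integers `p`, `q`: the sum over valid fillings of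
`p ^ (#0's) * q ^ (#1's)`. -/
noncomputable def Fval {k : ℕ} (lam : Fin k → ℕ) (p q : ℤ) : ℤ :=
  ∑ F ∈ Finset.univ.filter
      (fun F : ∀ i : Fin k, Fin (lam i) → Bool => ValidFilling lam F),
    p ^ fillZeros F * q ^ fillOnes F

/-!
Both sides satisfy Carlitz' recurrence for the `q`-Eulerian numbers.

Permutations: let the largest letter be inserted into a word of `n` letters with `d` descents.
Inserting it at the end or into one of the descents, from right to left, adds `0, 1, …, d` to the
major index and no descent; inserting it into one of the remaining places, from left to right,
adds `d + 1, …, n` and one descent.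

Tableaux: call a row restricted if it contains a `0` with a `1` above it. A new column on the left
must have a `0` in each restricted row. To obtain a recurrence, the generating function is refined
by a number `j` of further columns on the left that already contain a `1` above the rectangle: they
consist of `0`s in the restricted rows and may be any `0 ⋯ 0 1 ⋯ 1` in the others. Summing over the
place of the topmost `1` of the leftmost column then telescopes, and turns this column into one of
the further columns. The resulting recurrence raises `j`, but by induction it implies a
`q`-Eulerian recurrence for every `j`, which at `j = 0` is that of Carlitz.
-/

section QInt

variable {R : Type*} [Semiring R] (p : R)

/-- The `q`-integer `[j]_p = 1 + p + ⋯ + p ^ (j - 1)`. -/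
def qInt (j : ℕ) : R := ∑ i ∈ range j, p ^ i

theorem qInt_succ (j : ℕ) : qInt p (j + 1) = qInt p j + p ^ j :=
  sum_range_succ _ _

theorem qInt_succ' (j : ℕ) : qInt p (j + 1) = p * qInt p j + 1 :=
  geom_sum_succ

end QInt

section Tableaux

variable {k m : ℕ}

/-- Row `i` is restricted if it contains a `0` with a `1` above it; every box to the left of such a
`0` must be a `0`. -/
def RowRestricted (T : Fin k → Fin m → Fin 3) (i : Fin k) : Prop :=
  ∃ l, T i l = 0 ∧ ∃ i' < i, T i' l = 1

/-- The tableau obtained by adding on the left a full-height column, with `1`s where `c` is `true`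
and `0`s elsewhere. -/
def addColumn (c : Fin k → Bool) (T : Fin k → Fin m → Fin 3) : Fin k → Fin (m + 1) → Fin 3 :=
  fun i => Fin.cons (if c i then 1 else 0) (T i)

/-- The tableau obtained by adding at the bottom a row of length `0`. -/
def addEmptyRow (T : Fin k → Fin m → Fin 3) : Fin (k + 1) → Fin m → Fin 3 :=
  Fin.snoc T fun _ => 2

/-- The column `c` (`true` for `1`) can be added on the left of a tableau whose restricted rows are
given by `r`. For the sake of recursion on the height, `c` may be only the lower part of the column,
with `s` saying whether the upper part contains a `1`. -/
def AdmissibleColumn (s : Prop) (r : Fin k → Prop) (c : Fin k → Bool) : Prop :=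
  (∀ i, r i → c i = false) ∧ (s ∨ ∃ i, c i = true)

theorem rowRestricted_addColumn {c : Fin k → Bool} {T : Fin k → Fin m → Fin 3} {i : Fin k} :
    RowRestricted (addColumn c T) i ↔
      RowRestricted T i ∨ c i = false ∧ ∃ i' < i, c i' = true := by
  simp only [RowRestricted, addColumn, Fin.exists_fin_succ, Fin.cons_zero, Fin.cons_succ]
  rw [or_comm]
  simp

theorem isPermTableau_addColumn {c : Fin k → Bool} {T : Fin k → Fin m → Fin 3} :
    IsPermTableau (addColumn c T) ↔
      IsPermTableau T ∧ AdmissibleColumn False (RowRestricted T) c := by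
  have hne (i) : (if c i then 1 else 0 : Fin 3) ≠ 2 := by split <;> decide
  have hone (i) : (if c i then 1 else 0 : Fin 3) = 1 ↔ c i = true := by simp
  simp only [IsPermTableau, AdmissibleColumn, RowRestricted, addColumn, Fin.forall_fin_succ,
    Fin.exists_fin_succ, Fin.cons_zero, Fin.cons_succ, Fin.succ_lt_succ_iff, Fin.not_lt_zero,
    Fin.succ_pos, Fin.succ_le_succ_iff, Fin.zero_le, hne, hone, false_and, true_and, false_or,
    forall_const, ne_eq, not_false_eq_true, exists_false, and_false, Fin.le_zero_iff,
    Fin.succ_ne_zero, false_imp_iff, imp_true_iff]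
  constructor
  · rintro ⟨⟨hc, hcol⟩, hshape, havoid⟩
    exact ⟨⟨hcol, hshape, by grind⟩, by grind, hc⟩
  · rintro ⟨⟨hcol, hshape, havoid⟩, hr, hc⟩
    exact ⟨⟨hc, hcol⟩, hshape, by grind⟩

theorem zerosT_addColumn (c : Fin k → Bool) (T : Fin k → Fin m → Fin 3) :
    zerosT (addColumn c T) = #{i | c i = false} + zerosT T := by
  simp only [zerosT, card_filter, ← sum_add_distrib]
  refine sum_congr rfl fun i _ => ?_
  rw [Fin.sum_univ_succ]
  simp [addColumn]

theorem addColumn_tail {T : Fin k → Fin (m + 1) → Fin 3} (hT : ∀ i, T i 0 ≠ 2) :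
    addColumn (fun i => decide (T i 0 = 1)) (fun i => Fin.tail (T i)) = T := by
  funext i
  rw [addColumn]
  convert Fin.cons_self_tail (T i)
  have := hT i
  generalize T i 0 = x at this
  revert x; decide

theorem exists_lt_castSucc_addEmptyRow {T : Fin k → Fin m → Fin 3} {i : Fin k} {l : Fin m} :
    (∃ i' < i.castSucc, addEmptyRow T i' l = 1) ↔ ∃ i' < i, T i' l = 1 := by
  simp [addEmptyRow, Fin.exists_fin_succ', (Fin.castSucc_lt_last i).not_gt]

theorem rowRestricted_addEmptyRow_castSucc {T : Fin k → Fin m → Fin 3} {i : Fin k} :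
    RowRestricted (addEmptyRow T) i.castSucc ↔ RowRestricted T i := by
  simp only [RowRestricted, exists_lt_castSucc_addEmptyRow]
  simp only [addEmptyRow, Fin.snoc_castSucc]

theorem not_rowRestricted_addEmptyRow_last (T : Fin k → Fin m → Fin 3) :
    ¬ RowRestricted (addEmptyRow T) (Fin.last k) := by
  rintro ⟨l, h, -⟩
  simp [addEmptyRow] at h

theorem isPermTableau_addEmptyRow {T : Fin k → Fin m → Fin 3} :
    IsPermTableau (addEmptyRow T) ↔ IsPermTableau T := by
  simp only [IsPermTableau, Fin.forall_fin_succ', exists_lt_castSucc_addEmptyRow]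
  simp [addEmptyRow, Fin.exists_fin_succ', (Fin.castSucc_lt_last _).not_ge]

theorem zerosT_addEmptyRow (T : Fin k → Fin m → Fin 3) : zerosT (addEmptyRow T) = zerosT T := by
  simp [zerosT, addEmptyRow, Fin.sum_univ_castSucc]

theorem addEmptyRow_init {T : Fin (k + 1) → Fin (m + 1) → Fin 3} (hT : IsPermTableau T)
    (hlast : T (Fin.last k) 0 = 2) : addEmptyRow (Fin.init T) = T := by
  rw [addEmptyRow]
  convert Fin.snoc_init_self T with l
  by_contra hl
  exact hT.2.1 _ l (Ne.symm hl) _ 0 le_rfl (Fin.zero_le _) hlast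

end Tableaux

section ColumnSum

variable {R : Type*} [CommSemiring R] (p : R)

open Classical in
/-- The generating function by number of `0`s of the possible fillings of `j` boxes to the left of a
row of a tableau, when each of these boxes has a `1` above it: if the row is restricted (`r`) they
contain only `0`s, otherwise they read `0 ⋯ 0 1 ⋯ 1`. -/
noncomputable def rowFactor (j : ℕ) (r : Prop) : R := if r then p ^ j else qInt p (j + 1)

theorem rowFactor_of {j : ℕ} {r : Prop} (h : r) : rowFactor p j r = p ^ j := if_pos h

theorem rowFactor_of_not {j : ℕ} {r : Prop} (h : ¬ r) : rowFactor p j r = qInt p (j + 1) :=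
  if_neg h

/-- The weight of the column `c` together with the `j` boxes to its left in each row, see
`rowFactor`; `s` and `r` are as in `AdmissibleColumn`. -/
noncomputable def columnWeight (j : ℕ) (s : Prop) {k : ℕ} (r : Fin k → Prop) (c : Fin k → Bool) :
    R :=
  ∏ i, (if c i then 1 else p) *
    rowFactor p j (r i ∨ c i = false ∧ (s ∨ ∃ i' < i, c i' = true))

open Classical in
/-- The generating function of the admissible columns, with the weights of `columnWeight`. -/
noncomputable def columnSum (j : ℕ) (s : Prop) {k : ℕ} (r : Fin k → Prop) : R :=
  ∑ c with AdmissibleColumn s r c, columnWeight p j s r c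

theorem admissibleColumn_cons {k : ℕ} {s : Prop} {r : Fin (k + 1) → Prop} {b : Bool}
    {c : Fin k → Bool} : AdmissibleColumn s r (Fin.cons b c) ↔
      (r 0 → b = false) ∧ AdmissibleColumn (s ∨ b = true) (Fin.tail r) c := by
  simp only [AdmissibleColumn, Fin.forall_fin_succ, Fin.exists_fin_succ, Fin.cons_zero,
    Fin.cons_succ, Fin.tail, or_assoc, and_assoc]

theorem columnWeight_cons (j : ℕ) {k : ℕ} (s : Prop) (r : Fin (k + 1) → Prop) (b : Bool)
    (c : Fin k → Bool) : columnWeight p j s r (Fin.cons b c) =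
      (if b then 1 else p) * rowFactor p j (r 0 ∨ b = false ∧ s) *
        columnWeight p j (s ∨ b = true) (Fin.tail r) c := by
  simp only [columnWeight, Fin.prod_univ_succ, Fin.exists_fin_succ, Fin.cons_zero, Fin.cons_succ,
    Fin.not_lt_zero, false_and, exists_false, or_false, Fin.succ_pos, true_and,
    Fin.succ_lt_succ_iff, Fin.tail, or_assoc]

theorem sum_fin_succ_bool {M : Type*} [AddCommMonoid M] {k : ℕ} (f : (Fin (k + 1) → Bool) → M) :
    ∑ c, f c = ∑ c, f (Fin.cons true c) + ∑ c, f (Fin.cons false c) := by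
  rw [← (Fin.consEquiv fun _ : Fin (k + 1) => Bool).sum_comp, Fintype.sum_prod_type,
    Fintype.sum_bool]
  rfl

open Classical in
theorem columnSum_succ (j : ℕ) {k : ℕ} (s : Prop) (r : Fin (k + 1) → Prop) :
    columnSum p j s r =
      p * rowFactor p j (r 0 ∨ s) * columnSum p j s (Fin.tail r) +
        (if r 0 then 0 else qInt p (j + 1) * columnSum p j True (Fin.tail r)) := by
  have hcons (b : Bool) (c : Fin k → Bool) :=
    if_congr (admissibleColumn_cons (s := s) (r := r) (b := b) (c := c))
      (columnWeight_cons p j s r b c) (rfl : (0 : R) = 0)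
  simp only [columnSum, sum_filter, sum_fin_succ_bool, hcons]
  by_cases hr : r 0 <;> simp [hr, rowFactor, mul_sum, add_comm]

theorem columnSum_true (j : ℕ) {k : ℕ} (r : Fin k → Prop) :
    columnSum p j True r = ∏ i, rowFactor p (j + 1) (r i) := by
  induction k with
  | zero => simp [columnSum, AdmissibleColumn, columnWeight]
  | succ k ih =>
    rw [columnSum_succ, ih, Fin.prod_univ_succ, rowFactor_of p (Or.inr trivial)]
    by_cases hr : r 0
    · rw [if_pos hr, rowFactor_of p hr, Fin.tail_def]
      ring
    · rw [if_neg hr, rowFactor_of_not p hr, qInt_succ p (j + 1), Fin.tail_def]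
      ring

theorem columnSum_false {R : Type*} [CommRing R] (p : R) (j : ℕ) {k : ℕ} (r : Fin k → Prop) :
    columnSum p j False r + p ^ k * qInt p (j + 1) * ∏ i, rowFactor p j (r i) =
      qInt p (j + 1) * ∏ i, rowFactor p (j + 1) (r i) := by
  induction k with
  | zero => simp [columnSum, AdmissibleColumn]
  | succ k ih =>
    specialize ih (Fin.tail r)
    rw [columnSum_succ, columnSum_true, Fin.prod_univ_succ, Fin.prod_univ_succ, or_false]
    simp only [Fin.tail_def] at ih ⊢
    by_cases hr : r 0
    · rw [if_pos hr, rowFactor_of p hr, rowFactor_of p hr]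
      linear_combination p ^ (j + 1) * ih
    · rw [if_neg hr, rowFactor_of_not p hr, rowFactor_of_not p hr, qInt_succ' p (j + 1)]
      linear_combination p * qInt p (j + 1) * ih

end ColumnSum

section TableauSum

variable {R : Type*} [CommSemiring R] (p : R) {k m : ℕ}

/-- The generating function by number of `0`s of the ways to add on the left of `T` another `j`
columns which already have a `1` above the first row. -/
noncomputable def tableauWeight (j : ℕ) (T : Fin k → Fin m → Fin 3) : R :=
  p ^ zerosT T * ∏ i, rowFactor p j (RowRestricted T i)

open Classical in
/-- The generating function by number of `0`s of the permutation tableaux in a `k × m` rectangle,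
refined by the catalytic parameter `j` of `tableauWeight`. -/
noncomputable def tableauSum (k m j : ℕ) : R :=
  ∑ T : Fin k → Fin m → Fin 3 with IsPermTableau T, tableauWeight p j T

theorem tableauWeight_addColumn (j : ℕ) (c : Fin k → Bool) (T : Fin k → Fin m → Fin 3) :
    tableauWeight p j (addColumn c T) =
      p ^ zerosT T * columnWeight p j False (RowRestricted T) c := by
  have hzeros : ∏ i, (if c i then 1 else p) = p ^ #{i | c i = false} := by
    simp [prod_ite]
  simp only [tableauWeight, columnWeight, zerosT_addColumn, rowRestricted_addColumn,
    prod_mul_distrib, hzeros, pow_add, false_or]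
  ring

theorem tableauWeight_addEmptyRow (j : ℕ) (T : Fin k → Fin m → Fin 3) :
    tableauWeight p j (addEmptyRow T) = qInt p (j + 1) * tableauWeight p j T := by
  simp only [tableauWeight, zerosT_addEmptyRow, Fin.prod_univ_castSucc,
    rowRestricted_addEmptyRow_castSucc, rowFactor_of_not p (not_rowRestricted_addEmptyRow_last T)]
  ring

open Classical in
theorem sum_tableauWeight_of_last_eq_two (k m j : ℕ) :
    ∑ T : Fin (k + 1) → Fin (m + 1) → Fin 3 with IsPermTableau T ∧ T (Fin.last k) 0 = 2,
      tableauWeight p j T = qInt p (j + 1) * tableauSum p k (m + 1) j := by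
  rw [tableauSum, mul_sum]
  symm
  refine sum_bij' (fun T _ => addEmptyRow T) (fun T _ => Fin.init T) ?_ ?_ ?_ ?_ ?_
  · intro T hT
    simp only [mem_filter, mem_univ, true_and] at hT ⊢
    exact ⟨isPermTableau_addEmptyRow.mpr hT, by simp [addEmptyRow]⟩
  · intro T hT
    obtain ⟨hT, hlast⟩ := (mem_filter.mp hT).2
    rw [← addEmptyRow_init hT hlast, isPermTableau_addEmptyRow] at hT
    simpa using hT
  · exact fun T _ => Fin.init_snoc _ _
  · intro T hT
    obtain ⟨hT, hlast⟩ := (mem_filter.mp hT).2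
    exact addEmptyRow_init hT hlast
  · exact fun T _ => (tableauWeight_addEmptyRow p j T).symm

open Classical in
theorem sum_tableauWeight_of_last_ne_two (k m j : ℕ) :
    ∑ T : Fin (k + 1) → Fin (m + 1) → Fin 3 with IsPermTableau T ∧ T (Fin.last k) 0 ≠ 2,
      tableauWeight p j T =
    ∑ T : Fin (k + 1) → Fin m → Fin 3 with IsPermTableau T,
      p ^ zerosT T * columnSum p j False (RowRestricted T) := by
  have hcut {T : Fin (k + 1) → Fin (m + 1) → Fin 3}
      (hT : IsPermTableau T ∧ T (Fin.last k) 0 ≠ 2) :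
      addColumn (fun i => decide (T i 0 = 1)) (fun i => Fin.tail (T i)) = T :=
    addColumn_tail fun i => hT.1.2.1 _ 0 hT.2 i 0 (Fin.le_last i) le_rfl
  simp only [columnSum, mul_sum]
  rw [sum_sigma']
  symm
  refine sum_bij' (fun x _ => addColumn x.2 x.1)
    (fun T _ => ⟨fun i => Fin.tail (T i), fun i => decide (T i 0 = 1)⟩) ?_ ?_ ?_ ?_ ?_
  · rintro ⟨T, c⟩ hTc
    simp only [mem_sigma, mem_filter, mem_univ, true_and, isPermTableau_addColumn] at hTc ⊢
    refine ⟨hTc, ?_⟩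
    simp only [addColumn, Fin.cons_zero]
    split <;> decide
  · intro T hT
    replace hT := (mem_filter.mp hT).2
    have hcol := hT.1
    rw [← hcut hT, isPermTableau_addColumn] at hcol
    simpa using hcol
  · rintro ⟨T, c⟩ -
    simp [addColumn]
  · exact fun T hT => hcut (mem_filter.mp hT).2
  · exact fun x _ => (tableauWeight_addColumn p j x.2 x.1).symm

open Classical in
theorem tableauSum_eq_sum_zerosT (k m : ℕ) :
    tableauSum p k m 0 = ∑ T : Fin k → Fin m → Fin 3 with IsPermTableau T, p ^ zerosT T := by
  simp [tableauSum, tableauWeight, rowFactor, qInt]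

theorem tableauSum_zero_left (m j : ℕ) : tableauSum p 0 (m + 1) j = 0 := by
  classical
  rw [tableauSum, filter_false_of_mem fun T _ hT => ?_, sum_empty]
  exact (hT.1 0).elim fun i => i.elim0

theorem tableauSum_zero_right (k j : ℕ) : tableauSum p k 0 j = qInt p (j + 1) ^ k := by
  simp [tableauSum, tableauWeight, IsPermTableau, RowRestricted, rowFactor, zerosT]

end TableauSum

section TableauRecurrence

variable {R : Type*} [CommRing R] (p : R)

theorem tableauSum_succ_succ (k m j : ℕ) :
    tableauSum p (k + 1) (m + 1) j + p ^ (k + 1) * qInt p (j + 1) * tableauSum p (k + 1) m j =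
      qInt p (j + 1) * (tableauSum p k (m + 1) j + tableauSum p (k + 1) m (j + 1)) := by
  classical
  have hsplit : tableauSum p (k + 1) (m + 1) j = qInt p (j + 1) * tableauSum p k (m + 1) j +
      ∑ T : Fin (k + 1) → Fin m → Fin 3 with IsPermTableau T,
        p ^ zerosT T * columnSum p j False (RowRestricted T) := by
    rw [← sum_tableauWeight_of_last_eq_two, ← sum_tableauWeight_of_last_ne_two, tableauSum,
      ← sum_filter_add_sum_filter_not _ fun T => T (Fin.last k) 0 = 2, filter_filter, filter_filter]
  rw [hsplit, mul_add, add_assoc]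
  congr 1
  simp only [tableauSum, tableauWeight, mul_sum, ← sum_add_distrib]
  refine sum_congr rfl fun T _ => ?_
  linear_combination p ^ zerosT T * columnSum_false p j (RowRestricted T)

theorem tableauSum_one (m j : ℕ) : tableauSum p 1 m j = qInt p (j + 1) := by
  induction m generalizing j with
  | zero => rw [tableauSum_zero_right, pow_one]
  | succ m ih =>
    have hrec := tableauSum_succ_succ p 0 m j
    rw [zero_add, ih, ih, tableauSum_zero_left, qInt_succ' p (j + 1)] at hrec
    linear_combination hrec

theorem tableauSum_euler_one (k j : ℕ) :
    tableauSum p (k + 1) 1 j = qInt p (k + 1) * qInt p (j + 1) ^ (k + 1) +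
      qInt p (j + 2) * tableauSum p k 1 j := by
  induction k with
  | zero =>
    rw [tableauSum_one, tableauSum_zero_left]
    simp [qInt]
  | succ k ih =>
    have hrec (k : ℕ) := tableauSum_succ_succ p k 0 j
    simp only [tableauSum_zero_right, zero_add, qInt_succ' p (j + 1)] at hrec ih ⊢
    rw [qInt_succ p (k + 1)]
    linear_combination hrec (k + 1) + qInt p (j + 1) * ih - (1 + p * qInt p (j + 1)) * hrec k

theorem tableauSum_euler (k m j : ℕ) :
    tableauSum p (k + 1) (m + 1) j = qInt p (k + 1) * tableauSum p (k + 1) m j +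
      qInt p (m + j + 2) * tableauSum p k (m + 1) j := by
  induction k generalizing m j with
  | zero =>
    rw [tableauSum_zero_left, zero_add, tableauSum_one, tableauSum_one]
    simp [qInt]
  | succ k ihk =>
    induction m generalizing j with
    | zero =>
      rw [tableauSum_zero_right, zero_add, zero_add, tableauSum_euler_one]
    | succ m ihm =>
      have hrec (k m : ℕ) := tableauSum_succ_succ p k m j
      have hk := ihk (m + 1) j
      have hmj := ihm (j + 1)
      have hm := ihm j
      rw [show m + 1 + j + 2 = m + j + 2 + 1 by ring, qInt_succ' p (m + j + 2)] at hk ⊢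
      rw [show m + (j + 1) + 2 = m + j + 2 + 1 by ring, qInt_succ' p (m + j + 2),
        qInt_succ p (k + 1)] at hmj
      rw [qInt_succ p (k + 1)] at hm ⊢
      linear_combination hrec (k + 1) (m + 1) + qInt p (j + 1) * hk + qInt p (j + 1) * hmj -
        p ^ (k + 2) * qInt p (j + 1) * hm - (qInt p (k + 1) + p ^ (k + 1)) * hrec (k + 1) m -
        (p * qInt p (m + j + 2) + 1) * hrec k (m + 1)

end TableauRecurrence

section Permutations

variable {n : ℕ}

/-- The descents of `π`, numbered from `1` as in the definition of `maj`: `d` counts the letters in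
front of the descent bottom. -/
def descentPositions (π : Equiv.Perm (Fin n)) : Finset ℕ :=
  (descents π).map ⟨fun i => i.val + 1, fun _ _ h => Fin.ext (Nat.succ_injective h)⟩

theorem card_descentPositions (π : Equiv.Perm (Fin n)) : #(descentPositions π) = des π :=
  card_map _

theorem sum_descentPositions (π : Equiv.Perm (Fin n)) : ∑ d ∈ descentPositions π, d = maj π :=
  sum_map _ _ _

theorem mem_descentPositions {π : Equiv.Perm (Fin n)} {d : ℕ} :
    d ∈ descentPositions π ↔
      ∃ (_ : 0 < d) (h : d < n), π ⟨d, h⟩ < π ⟨d - 1, by omega⟩ := by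
  simp only [descentPositions, descents, mem_map, mem_filter, mem_univ, true_and]
  constructor
  · rintro ⟨i, ⟨h, hlt⟩, rfl⟩
    exact ⟨i.val.succ_pos, h, hlt⟩
  · rintro ⟨hpos, h, hlt⟩
    obtain ⟨i, rfl⟩ := Nat.exists_eq_succ_of_ne_zero hpos.ne'
    exact ⟨⟨i, by omega⟩, ⟨h, hlt⟩, rfl⟩

theorem descentPositions_subset_Ico (π : Equiv.Perm (Fin n)) : descentPositions π ⊆ Ico 1 n := by
  intro d hd
  obtain ⟨hpos, hlt, -⟩ := mem_descentPositions.mp hd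
  exact mem_Ico.mpr ⟨hpos, hlt⟩

theorem sum_card_filter_le {α M : Type*} [LinearOrder α] [AddCommMonoid M] (s : Finset α)
    (f : ℕ → M) : ∑ i ∈ s, f #{j ∈ s | j ≤ i} = ∑ r ∈ range #s, f (r + 1) := by
  induction s using Finset.induction_on_max with
  | empty => simp
  | insert a s hmax ih =>
    have ha : a ∉ s := fun h => (hmax a h).false
    have hall : {j ∈ insert a s | j ≤ a} = insert a s := by grind
    have hbelow : ∀ i ∈ s, {j ∈ insert a s | j ≤ i} = {j ∈ s | j ≤ i} := by grind
    rw [sum_insert ha, hall, card_insert_of_notMem ha, sum_range_succ, ← ih, add_comm]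
    exact congrArg (· + _) (sum_congr rfl fun i hi => by rw [hbelow i hi])

theorem sum_card_filter_ge {α M : Type*} [LinearOrder α] [AddCommMonoid M] (s : Finset α)
    (f : ℕ → M) : ∑ i ∈ s, f #{j ∈ s | i ≤ j} = ∑ r ∈ range #s, f (r + 1) :=
  sum_card_filter_le (α := αᵒᵈ) s f

theorem choose_two_card_le_sum {s : Finset ℕ} (hs : 0 ∉ s) : (#s + 1).choose 2 ≤ ∑ i ∈ s, i :=
  calc (#s + 1).choose 2 = ∑ r ∈ range #s, (r + 1) := by
        rw [Nat.choose_two_right, ← sum_range_id, sum_range_succ', add_zero]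
    _ = ∑ i ∈ s, #{j ∈ s | j ≤ i} := (sum_card_filter_le s id).symm
    _ ≤ ∑ i ∈ s, #(Icc 1 i) := sum_le_sum fun i _ => card_le_card (by grind)
    _ = ∑ i ∈ s, i := by simp only [Nat.card_Icc, Nat.add_sub_cancel]

theorem choose_des_le_maj (π : Equiv.Perm (Fin n)) : (des π + 1).choose 2 ≤ maj π := by
  rw [← card_descentPositions, ← sum_descentPositions]
  exact choose_two_card_le_sum fun h => by simpa using descentPositions_subset_Ico π h

theorem des_lt (π : Equiv.Perm (Fin (n + 1))) : des π < n + 1 := by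
  have := card_le_card (descentPositions_subset_Ico π)
  rw [card_descentPositions, Nat.card_Ico] at this
  omega

/-- The permutation whose one-line word is that of `π` with a new largest letter inserted after the
first `a` letters. -/
def insertMax (a : Fin (n + 1)) (π : Equiv.Perm (Fin n)) : Equiv.Perm (Fin (n + 1)) :=
  (finSuccEquiv' a).trans ((Equiv.optionCongr π).trans (finSuccEquiv' (Fin.last n)).symm)

theorem insertMax_self (a : Fin (n + 1)) (π : Equiv.Perm (Fin n)) :
    insertMax a π a = Fin.last n := by
  simp [insertMax]

theorem insertMax_succAbove (a : Fin (n + 1)) (π : Equiv.Perm (Fin n)) (i : Fin n) :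
    insertMax a π (a.succAbove i) = (π i).castSucc := by
  simp [insertMax]

theorem insertMax_of_lt {a : Fin (n + 1)} (π : Equiv.Perm (Fin n)) {i : ℕ} (h : i < a.val) :
    insertMax a π ⟨i, by omega⟩ = (π ⟨i, by omega⟩).castSucc := by
  rw [← insertMax_succAbove a, Fin.succAbove_of_castSucc_lt _ _ h]
  rfl

theorem insertMax_of_gt {a : Fin (n + 1)} (π : Equiv.Perm (Fin n)) {i : ℕ} (h : a.val < i)
    (hi : i < n + 1) : insertMax a π ⟨i, hi⟩ = (π ⟨i - 1, by omega⟩).castSucc := by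
  rw [← insertMax_succAbove a, Fin.succAbove_of_le_castSucc _ _ (Nat.le_sub_one_of_lt h)]
  congr 1
  exact Fin.ext (Nat.sub_add_cancel (Nat.one_le_of_lt h)).symm

theorem insertMax_bijective (n : ℕ) :
    Function.Bijective fun x : Equiv.Perm (Fin n) × Fin (n + 1) => insertMax x.2 x.1 := by
  rw [Fintype.bijective_iff_injective_and_card]
  refine ⟨?_, by simp [Fintype.card_perm, Nat.factorial_succ, mul_comm]⟩
  rintro ⟨π, a⟩ ⟨σ, b⟩ (h : insertMax a π = insertMax b σ)
  obtain rfl : a = b := (insertMax a π).injective <| by rw [insertMax_self, h, insertMax_self]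
  refine Prod.ext (Equiv.ext fun i => Fin.castSucc_injective n ?_) rfl
  simp only [← insertMax_succAbove a, h]

section DescentsAfterInsertion

variable {a : Fin (n + 1)} {π : Equiv.Perm (Fin n)} {d : ℕ}

theorem mem_descentPositions_insertMax_of_lt (h : d < a.val) :
    d ∈ descentPositions (insertMax a π) ↔ d ∈ descentPositions π := by
  have hn : d < n := by omega
  simp only [mem_descentPositions, hn, Nat.lt_succ_of_lt hn, exists_true_left]
  refine exists_congr fun _ => ?_
  rw [insertMax_of_lt π h, insertMax_of_lt π (by omega), Fin.castSucc_lt_castSucc_iff]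

theorem notMem_descentPositions_insertMax_self : a.val ∉ descentPositions (insertMax a π) := by
  rw [mem_descentPositions]
  rintro ⟨_, _, hlt⟩
  rw [Fin.eta, insertMax_self] at hlt
  exact (Fin.le_last _).not_gt hlt

theorem succ_mem_descentPositions_insertMax :
    a.val + 1 ∈ descentPositions (insertMax a π) ↔ a.val < n := by
  rw [mem_descentPositions]
  refine ⟨fun ⟨_, h, _⟩ => Nat.lt_of_succ_lt_succ h, fun h => ⟨a.val.succ_pos, by omega, ?_⟩⟩
  simp only [Nat.add_sub_cancel, Fin.eta, insertMax_self, insertMax_of_gt π a.val.lt_succ_self,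
    Fin.castSucc_lt_last]

theorem succ_mem_descentPositions_insertMax_of_gt (h : a.val < d) :
    d + 1 ∈ descentPositions (insertMax a π) ↔ d ∈ descentPositions π := by
  simp only [mem_descentPositions, Nat.zero_lt_of_lt h, d.succ_pos, exists_true_left,
    Nat.add_lt_add_iff_right, Nat.add_sub_cancel]
  refine exists_congr fun _ => ?_
  rw [insertMax_of_gt π (by omega), insertMax_of_gt π h, Fin.castSucc_lt_castSucc_iff]
  rfl

end DescentsAfterInsertion

theorem descentPositions_insertMax_last (π : Equiv.Perm (Fin n)) :
    descentPositions (insertMax (Fin.last n) π) = descentPositions π := by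
  ext d
  obtain hd | rfl | hd := lt_trichotomy d n
  · exact mem_descentPositions_insertMax_of_lt hd
  · exact iff_of_false notMem_descentPositions_insertMax_self
      fun h => (mem_Ico.mp (descentPositions_subset_Ico π h)).2.false
  · refine iff_of_false (fun h => ?_) (fun h => ?_) <;>
      have := mem_Ico.mp (descentPositions_subset_Ico _ h) <;> omega

/-- The new position of the descent `d` when the largest letter is inserted after the first `a`
letters. The new descent, at `a + 1`, counts as that at `a` moved by one place. -/
def shiftFrom (a d : ℕ) : ℕ := if d < a then d else d + 1

theorem shiftFrom_injective (a : ℕ) : Function.Injective (shiftFrom a) := by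
  grind [Function.Injective, shiftFrom]

theorem shiftFrom_of_lt {a d : ℕ} (h : d < a) : shiftFrom a d = d := if_pos h

theorem shiftFrom_of_le {a d : ℕ} (h : a ≤ d) : shiftFrom a d = d + 1 := if_neg h.not_gt

theorem shiftFrom_ne_self (a d : ℕ) : shiftFrom a d ≠ a := by
  grind [shiftFrom]

theorem sum_image_shiftFrom (s : Finset ℕ) (a : ℕ) :
    ∑ d ∈ s.image (shiftFrom a), d = ∑ d ∈ s, d + #{d ∈ s | a ≤ d} := by
  rw [sum_image (shiftFrom_injective a).injOn, card_filter, ← sum_add_distrib]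
  exact sum_congr rfl fun d _ => by grind [shiftFrom]

theorem descentPositions_insertMax_castSucc (a : Fin n) (π : Equiv.Perm (Fin n)) :
    descentPositions (insertMax a.castSucc π) =
      (insert a.val (descentPositions π)).image (shiftFrom a) := by
  ext d
  obtain hd | rfl | hd := lt_trichotomy d a
  · rw [mem_descentPositions_insertMax_of_lt hd]
    conv_rhs => rw [← shiftFrom_of_lt hd, (shiftFrom_injective _).mem_finset_image, mem_insert]
    exact (or_iff_right hd.ne).symm
  · refine iff_of_false notMem_descentPositions_insertMax_self fun h => ?_
    obtain ⟨d, -, hd⟩ := mem_image.mp h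
    exact shiftFrom_ne_self a d hd
  · obtain ⟨d, rfl⟩ := Nat.exists_eq_succ_of_ne_zero hd.ne_bot
    conv_rhs => rw [Nat.succ_eq_add_one, ← shiftFrom_of_le (Nat.le_of_lt_succ hd),
      (shiftFrom_injective _).mem_finset_image, mem_insert]
    obtain had | rfl := (Nat.le_of_lt_succ hd).lt_or_eq
    · rw [succ_mem_descentPositions_insertMax_of_gt had]
      exact (or_iff_right had.ne').symm
    · exact iff_of_true (succ_mem_descentPositions_insertMax.mpr a.isLt) (Or.inl rfl)

theorem des_insertMax_last (π : Equiv.Perm (Fin n)) : des (insertMax (Fin.last n) π) = des π := by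
  rw [← card_descentPositions, descentPositions_insertMax_last, card_descentPositions]

theorem maj_insertMax_last (π : Equiv.Perm (Fin n)) : maj (insertMax (Fin.last n) π) = maj π := by
  rw [← sum_descentPositions, descentPositions_insertMax_last, sum_descentPositions]

theorem des_insertMax_castSucc (a : Fin n) (π : Equiv.Perm (Fin n)) :
    des (insertMax a.castSucc π) = if a.val ∈ descentPositions π then des π else des π + 1 := by
  rw [← card_descentPositions, descentPositions_insertMax_castSucc,
    card_image_of_injective _ (shiftFrom_injective _), card_insert_eq_ite, card_descentPositions]

theorem maj_insertMax_castSucc_of_mem {a : Fin n} {π : Equiv.Perm (Fin n)}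
    (ha : a.val ∈ descentPositions π) :
    maj (insertMax a.castSucc π) = maj π + #{d ∈ descentPositions π | a.val ≤ d} := by
  rw [← sum_descentPositions, descentPositions_insertMax_castSucc, sum_image_shiftFrom,
    insert_eq_of_mem ha, sum_descentPositions]

theorem descentPositions_subset_range (π : Equiv.Perm (Fin n)) :
    descentPositions π ⊆ range n := fun _ hd =>
  mem_range.mpr (mem_Ico.mp (descentPositions_subset_Ico π hd)).2

theorem add_card_filter_ge_eq {N a : ℕ} {s : Finset ℕ} (haN : a < N)
    (ha : a ∉ s) : a + 1 + #{d ∈ s | a ≤ d} = #s + #{d ∈ range N \ s | d ≤ a} := by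
  have hle : #{d ∈ s | d ≤ a} + #{d ∈ range N \ s | d ≤ a} = a + 1 := by
    rw [← card_union_of_disjoint (by grind [disjoint_left]), ← card_range (a + 1)]
    congr 1
    grind
  have hsplit : #{d ∈ s | d ≤ a} + #{d ∈ s | a ≤ d} = #s := by
    rw [← card_union_of_disjoint (by grind [disjoint_left])]
    congr 1
    grind
  omega

theorem maj_insertMax_castSucc_of_notMem {a : Fin n} {π : Equiv.Perm (Fin n)}
    (ha : a.val ∉ descentPositions π) :
    maj (insertMax a.castSucc π) =
      maj π + (des π + #{d ∈ range n \ descentPositions π | d ≤ a.val}) := by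
  rw [← sum_descentPositions, descentPositions_insertMax_castSucc, sum_image_shiftFrom,
    sum_insert ha, sum_descentPositions, filter_insert, if_pos le_rfl,
    card_insert_of_notMem (by simp [ha]), ← card_descentPositions,
    ← add_card_filter_ge_eq a.isLt ha]
  omega

variable {R : Type*} [CommSemiring R]

theorem sum_insertMax (p : R) (g : ℕ → R) (π : Equiv.Perm (Fin n)) :
    ∑ a, g (des (insertMax a π)) * p ^ maj (insertMax a π) =
      p ^ maj π * (g (des π) * qInt p (des π + 1) +
        g (des π + 1) * (p ^ (des π + 1) * qInt p (n - des π))) := by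
  set D := descentPositions π
  have hDn : D ⊆ range n := descentPositions_subset_range π
  have hterm (a : Fin n) : g (des (insertMax a.castSucc π)) * p ^ maj (insertMax a.castSucc π) =
      p ^ maj π * if a.val ∈ D then g (des π) * p ^ #{d ∈ D | a.val ≤ d}
        else g (des π + 1) * p ^ (des π + #{d ∈ range n \ D | d ≤ a.val}) := by
    by_cases ha : a.val ∈ D
    · rw [des_insertMax_castSucc, maj_insertMax_castSucc_of_mem ha, if_pos ha, if_pos ha, pow_add]
      ring
    · rw [des_insertMax_castSucc, maj_insertMax_castSucc_of_notMem ha, if_neg ha, if_neg ha]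
      ring
  have hdescent : 1 + ∑ a ∈ D, p ^ #{d ∈ D | a ≤ d} = qInt p (des π + 1) := by
    rw [sum_card_filter_ge, card_descentPositions, qInt, sum_range_succ', pow_zero, add_comm]
  have hascent : ∑ a ∈ range n \ D, p ^ (des π + #{d ∈ range n \ D | d ≤ a}) =
      p ^ (des π + 1) * qInt p (n - des π) := by
    rw [sum_card_filter_le _ fun r => p ^ (des π + r), card_sdiff_of_subset hDn, card_range,
      card_descentPositions, qInt, mul_sum]
    exact sum_congr rfl fun r _ => by ring
  rw [Fin.sum_univ_castSucc, des_insertMax_last, maj_insertMax_last,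
    sum_congr rfl fun a _ => hterm a, ← mul_sum,
    Fin.sum_univ_eq_sum_range (fun a => if a ∈ D then g (des π) * p ^ #{d ∈ D | a ≤ d}
      else g (des π + 1) * p ^ (des π + #{d ∈ range n \ D | d ≤ a})),
    sum_ite, filter_mem_eq_inter, inter_eq_right.mpr hDn, filter_notMem_eq_sdiff,
    ← mul_sum, ← mul_sum, ← hdescent, ← hascent]
  ring

/-- The generating function of the major index over the permutations of `n` letters with `d`
descents. -/
def majSum (p : R) (n d : ℕ) : R := ∑ π : Equiv.Perm (Fin n) with des π = d, p ^ maj π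

theorem majSum_succ_eq_sum (p : R) (n d : ℕ) :
    majSum p (n + 1) d = ∑ π : Equiv.Perm (Fin n), p ^ maj π *
      ((if des π = d then qInt p (des π + 1) else 0) +
        if des π + 1 = d then p ^ (des π + 1) * qInt p (n - des π) else 0) := by
  rw [majSum, sum_filter, ← (Equiv.ofBijective _ (insertMax_bijective n)).sum_comp,
    Fintype.sum_prod_type]
  refine sum_congr rfl fun π _ => ?_
  simpa using sum_insertMax p (fun e => if e = d then 1 else 0) π

theorem majSum_succ_zero (p : R) (n : ℕ) : majSum p (n + 1) 0 = majSum p n 0 := by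
  rw [majSum_succ_eq_sum, majSum, sum_filter]
  refine sum_congr rfl fun π _ => ?_
  by_cases h : des π = 0 <;> simp [h, qInt]

theorem majSum_succ_succ (p : R) (n d : ℕ) :
    majSum p (n + 1) (d + 1) =
      qInt p (d + 2) * majSum p n (d + 1) + p ^ (d + 1) * qInt p (n - d) * majSum p n d := by
  rw [majSum_succ_eq_sum]
  simp only [majSum, sum_filter, mul_sum, ← sum_add_distrib, Nat.succ_inj]
  refine sum_congr rfl fun π _ => ?_
  by_cases h : des π = d + 1
  · simp [h, mul_comm]
  by_cases h' : des π = d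
  · simp only [h', Nat.left_eq_add, one_ne_zero, ↓reduceIte, zero_add, mul_zero]
    ring
  · simp [h, h']

theorem majSum_zero_zero (p : R) : majSum p 0 0 = 1 := by
  simp [majSum, des, maj, descents]

theorem majSum_succ_eq_zero (p : R) {n d : ℕ} (h : n < d) : majSum p (n + 1) d = 0 := by
  rw [majSum, filter_false_of_mem fun π _ hd => ?_, sum_empty]
  have := des_lt π
  omega

end Permutations

theorem majSum_eq_tableauSum {R : Type*} [CommRing R] (p : R) (d m : ℕ) :
    majSum p (d + m + 1) d = p ^ (d + 1).choose 2 * tableauSum p (d + 1) m 0 := by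
  induction hN : d + m generalizing d m with
  | zero =>
    obtain ⟨rfl, rfl⟩ := Nat.add_eq_zero_iff.mp hN
    simp [majSum_succ_zero, majSum_zero_zero, tableauSum_one, qInt]
  | succ N ih =>
    obtain _ | d := d
    · rw [majSum_succ_zero, ih 0 (m - 1) (by omega), tableauSum_one, tableauSum_one]
    have hchoose : (d + 2).choose 2 = d + 1 + (d + 1).choose 2 := by
      rw [Nat.choose_succ_succ' (d + 1), Nat.choose_one_right]
    rw [majSum_succ_succ, ih d m (by omega), hchoose, pow_add]
    obtain _ | m := m
    · obtain rfl : N = d := by omega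
      rw [majSum_succ_eq_zero p N.lt_succ_self, tableauSum_zero_right, tableauSum_zero_right]
      simp only [qInt, mul_zero, pow_one, add_tsub_cancel_left, range_one, sum_singleton, pow_zero,
        mul_one, zero_add, one_pow]
      ring
    · rw [ih (d + 1) m (by omega), tableauSum_euler p (d + 1), hchoose, pow_add,
        show N + 1 - d = m + 0 + 2 by omega]
      ring

open Classical in
theorem rows_zeros_euler_mahonian (n k : ℕ) (hk1 : 1 ≤ k) (hk : k ≤ n) :
    ∑ T ∈ Finset.univ.filter
        (fun T : Fin k → Fin (n - k) → Fin 3 => IsPermTableau T),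
      (Polynomial.X : Polynomial ℕ) ^ zerosT T =
    ∑ π ∈ Finset.univ.filter (fun π : Equiv.Perm (Fin n) => des π = k - 1),
      (Polynomial.X : Polynomial ℕ) ^ (maj π - k.choose 2) := by
  -- The recurrences for tableaux are derived by subtraction, which is not available in `ℕ[X]`.
  apply Polynomial.map_injective (Nat.castRingHom ℤ) Nat.cast_injective
  simp only [Polynomial.map_sum, Polynomial.map_pow, Polynomial.map_X]
  obtain ⟨d, rfl⟩ := Nat.exists_eq_add_of_le' hk1
  obtain ⟨m, rfl⟩ := Nat.exists_eq_add_of_le hk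
  have hX : (Polynomial.X : Polynomial ℤ) ^ (d + 1).choose 2 ≠ 0 :=
    pow_ne_zero _ Polynomial.X_ne_zero
  apply mul_left_cancel₀ hX
  rw [← tableauSum_eq_sum_zerosT, Nat.add_sub_cancel_left, ← majSum_eq_tableauSum,
    Nat.add_right_comm, majSum, mul_sum, Nat.add_sub_cancel]
  refine sum_congr rfl fun π hπ => ?_
  have hmaj := choose_des_le_maj π
  rw [(mem_filter.mp hπ).2] at hmaj
  rw [← pow_add, Nat.add_sub_cancel' hmaj]
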